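/- arXiv:2404.13763 — 2 statements merged into one kernel-verified Lean document; each statement's English description precedes it below -/
import Mathlib

section
/- For all integers b ≥ 2 and k ≥ 1, the exact convergent-series identity I(b,0,k) = b·log b + ∑_{m=1}^∞ (−1)^{m−1} ζ(m+1)·(u_{k;m}(b,0) − u_{k−1;m}(b,0))/b^{m+1} holds, where the series on the right converges absolutely. -/
open Filter Asymptotics

/-- The Irwin harmonic sum `I(b,d,k)`: sum of `1/m` over positive integers `m`
whose base-`b` digit list contains the digit `d` exactly `k` times. -/
noncomputable def irwinSum (b d k : ℕ) : ℝ :=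
  ∑' m : ℕ, if 0 < m ∧ (Nat.digits b m).count d = k then (1 : ℝ) / m else 0

/-- `ζ(s) = ∑_{n ≥ 1} n^{-s}` for an integer exponent. -/
noncomputable def zetaR (s : ℕ) : ℝ := ∑' n : ℕ, 1 / ((n : ℝ) + 1) ^ s

/-- The `m`-th moment of the Irwin measure. -/
noncomputable def momentU (b d k m : ℕ) : ℝ :=
  ∑' l : ℕ, ((b : ℝ) ^ (l * (m + 1)))⁻¹ *
    ∑ n ∈ Finset.range (b ^ l),
      (if ((Finset.range l).filter fun i => n / b ^ i % b = d).card = k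
        then (n : ℝ) ^ m else 0)

/-!
Sorting the integers `m` counted by `irwinSum b 0 k` by their leading digit `a` and their number of
remaining digits writes `irwinSum b 0 k` as `∑ a ∈ Ico 1 b, S k a`, where `S k` is the Stieltjes
transform of the Irwin measure. This measure is self-similar, because a nonempty digit string is a
first digit followed by a shorter string, and so
`S (k + 1) n = S k (n * b) + ∑ a ∈ Ico 1 b, S (k + 1) (n * b + a)`.

Iterating this over `n = 1, …, N` pushes the sum over `Ico 1 b` out to the block
`Ico (N + 1) ((N + 1) * b)`, at the cost of the terms `S k (n * b) - S (k + 1) (n * b)`. As the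
measure has total mass `b`, `S (k + 1) n` is `b / n + O(1 / n ^ 2)` and the block sum tends to
`b * log b`. Expanding each correction term in moments, where the zeroth moments cancel, and
exchanging the two sums turns `∑ n, n ^ (-(m + 1))` into `ζ (m + 1)`.
-/

open Finset MeasureTheory
open scoped ENNReal NNReal Topology

section DigitStrings

variable {b d : ℕ}

/-- The number of occurrences of the digit `d` among the `l` lowest base-`b` digits of `n`. Unlike
in `Nat.digits`, leading zeros count, so `n < b ^ l` stands for a digit string of length `l`. -/
def digitCount (b d l n : ℕ) : ℕ := #{i ∈ range l | n / b ^ i % b = d}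

lemma digitCount_succ (b d l n : ℕ) :
    digitCount b d (l + 1) n = digitCount b d l (n / b) + if n % b = d then 1 else 0 := by
  simp only [digitCount, card_filter, sum_range_succ', pow_zero, Nat.div_one, pow_succ',
    Nat.div_div_eq_div_mul]

lemma digitCount_mul_pow_add {a l r : ℕ} (ha : a < b) (hr : r < b ^ l) :
    digitCount b d (l + 1) (a * b ^ l + r) = digitCount b d l r + if a = d then 1 else 0 := by
  induction l generalizing r with
  | zero =>
    obtain rfl : r = 0 := by simpa using hr
    simp only [pow_zero, mul_one, add_zero, digitCount_succ, Nat.mod_eq_of_lt ha]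
    simp only [digitCount, range_zero, filter_empty, card_empty]
  | succ l ih =>
    have hb : 0 < b := by omega
    have hsplit : a * b ^ (l + 1) + r = r + b * (a * b ^ l) := by ring
    rw [digitCount_succ, digitCount_succ b d l r, hsplit, Nat.add_mul_div_left _ _ hb,
      Nat.add_mul_mod_self_left, add_comm (r / b),
      ih ((Nat.div_lt_iff_lt_mul hb).2 (by rwa [← pow_succ])), add_right_comm]

lemma count_digits_eq_digitCount (hb : 1 < b) (d m : ℕ) :
    (b.digits m).count d = digitCount b d (b.digits m).length m := by
  induction m using Nat.strong_induction_on with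
  | _ m ih =>
    rcases m.eq_zero_or_pos with rfl | hm
    · simp [digitCount]
    · rw [Nat.digits_def' hb hm, List.count_cons, List.length_cons, digitCount_succ,
        ih _ (Nat.div_lt_self hm hb)]
      simp only [beq_iff_eq]

lemma count_digits_mul_pow_add {a l r : ℕ} (ha₀ : 0 < a) (ha : a < b) (hr : r < b ^ l) :
    (b.digits (a * b ^ l + r)).count d = digitCount b d l r + if a = d then 1 else 0 := by
  have hb : 1 < b := by omega
  have hlog : Nat.log b (a * b ^ l + r) = l :=
    Nat.log_eq_of_pow_le_of_lt_pow (by nlinarith) (by rw [pow_succ']; nlinarith)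
  have hpos : a * b ^ l + r ≠ 0 := by positivity
  rw [count_digits_eq_digitCount hb, Nat.length_digits _ _ hb hpos, hlog,
    digitCount_mul_pow_add ha hr]

lemma sum_range_mul_eq_sum_sum {M : Type*} [AddCommMonoid M] (m n : ℕ) (f : ℕ → M) :
    ∑ i ∈ range (m * n), f i = ∑ a ∈ range m, ∑ r ∈ range n, f (a * n + r) := by
  induction m with
  | zero => simp
  | succ m ih => rw [add_mul, one_mul, sum_range_add, ih, sum_range_succ]

/-- The digit strings of length `l` containing the digit `d` exactly `k` times, encoded as the
numbers below `b ^ l`. -/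
def digitStrings (b d k l : ℕ) : Finset ℕ := {n ∈ range (b ^ l) | digitCount b d l n = k}

lemma lt_of_mem_digitStrings {k l n : ℕ} (hn : n ∈ digitStrings b d k l) : n < b ^ l :=
  mem_range.1 (mem_filter.1 hn).1

lemma digitStrings_zero_zero (b d : ℕ) : digitStrings b d 0 0 = {0} := by
  simp [digitStrings, digitCount]

lemma digitStrings_succ_zero (b d k : ℕ) : digitStrings b d (k + 1) 0 = ∅ := by
  simp [digitStrings, digitCount]

lemma sum_digitStrings_succ {M : Type*} [AddCommMonoid M] (hd : d < b) (k l : ℕ) (f : ℕ → M) :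
    ∑ n ∈ digitStrings b d k (l + 1), f n =
      ∑ r ∈ range (b ^ l) with digitCount b d l r + 1 = k, f (d * b ^ l + r) +
        ∑ a ∈ (range b).erase d, ∑ r ∈ digitStrings b d k l, f (a * b ^ l + r) := by
  have hblock (a : ℕ) (ha : a < b) :
      ∑ r ∈ range (b ^ l),
          (if digitCount b d (l + 1) (a * b ^ l + r) = k then f (a * b ^ l + r) else 0) =
        ∑ r ∈ range (b ^ l) with digitCount b d l r + (if a = d then 1 else 0) = k,
          f (a * b ^ l + r) := by
    rw [sum_filter]
    exact sum_congr rfl fun r hr ↦ by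
      rw [digitCount_mul_pow_add ha (mem_range.1 hr)]
  rw [digitStrings, sum_filter, pow_succ', sum_range_mul_eq_sum_sum,
    ← add_sum_erase _ _ (mem_range.2 hd), hblock d hd, if_pos rfl]
  refine congrArg _ (sum_congr rfl fun a ha ↦ ?_)
  rw [hblock a (mem_range.1 (mem_of_mem_erase ha)), if_neg (ne_of_mem_erase ha), digitStrings]
  simp only [add_zero]

lemma sum_digitStrings_zero_succ {M : Type*} [AddCommMonoid M] (hd : d < b) (l : ℕ) (f : ℕ → M) :
    ∑ n ∈ digitStrings b d 0 (l + 1), f n =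
      ∑ a ∈ (range b).erase d, ∑ r ∈ digitStrings b d 0 l, f (a * b ^ l + r) := by
  simp [sum_digitStrings_succ hd 0 l f]

lemma sum_digitStrings_succ_succ {M : Type*} [AddCommMonoid M] (hd : d < b) (k l : ℕ)
    (f : ℕ → M) :
    ∑ n ∈ digitStrings b d (k + 1) (l + 1), f n =
      ∑ r ∈ digitStrings b d k l, f (d * b ^ l + r) +
        ∑ a ∈ (range b).erase d, ∑ r ∈ digitStrings b d (k + 1) l, f (a * b ^ l + r) := by
  simp only [sum_digitStrings_succ hd (k + 1) l f, Nat.add_right_cancel_iff]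
  rfl

lemma card_digitStrings (hd : d < b) (k l : ℕ) :
    #(digitStrings b d k l) = l.choose k * (b - 1) ^ (l - k) := by
  induction l generalizing k with
  | zero => cases k <;> simp [digitStrings_zero_zero, digitStrings_succ_zero]
  | succ l ih =>
    have hcard : #((range b).erase d) = b - 1 := by
      rw [card_erase_of_mem (mem_range.2 hd), card_range]
    cases k with
    | zero =>
      rw [card_eq_sum_ones, sum_digitStrings_zero_succ hd]
      simp only [sum_const, ih, hcard, Nat.choose_zero_right, Nat.sub_zero, smul_eq_mul, mul_one,
        one_mul, pow_succ']
    | succ k =>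
      rw [card_eq_sum_ones, sum_digitStrings_succ_succ hd]
      simp only [sum_const, ih, hcard, Nat.choose_succ_succ, Nat.add_sub_add_right, smul_eq_mul,
        mul_one, add_mul]
      rcases lt_or_ge k l with hkl | hkl
      · rw [show l - k = l - (k + 1) + 1 by omega]
        ring
      · simp [Nat.choose_eq_zero_of_lt (Nat.lt_succ_of_le hkl)]

end DigitStrings

section UnitIntervalMeasure

variable {μ ν : Measure ℝ} [IsFiniteMeasure μ] [IsFiniteMeasure ν]

lemma integrable_of_continuousOn_Icc {a b : ℝ} {f : ℝ → ℝ}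
    (hμ : ∀ᵐ x ∂μ, x ∈ Set.Icc a b) (hf : ContinuousOn f (Set.Icc a b)) : Integrable f μ := by
  rw [← Measure.restrict_eq_self_of_ae_mem hμ]
  exact hf.integrableOn_Icc

/-- The Stieltjes transform `t ↦ ∫ (t + x)⁻¹ ∂μ`, with the sign of `x` chosen for measures on
`[0, 1]` and `t > 0`. -/
noncomputable def stieltjesTransform (μ : Measure ℝ) (t : ℝ) : ℝ := ∫ x, (t + x)⁻¹ ∂μ

lemma continuousOn_inv_add {t : ℝ} (ht : 0 < t) :
    ContinuousOn (fun x ↦ (t + x)⁻¹) (Set.Icc 0 1) :=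
  ContinuousOn.inv₀ (by fun_prop) fun x hx ↦ by linarith [hx.1]

lemma abs_stieltjesTransform_sub_le (hμ : ∀ᵐ x ∂μ, x ∈ Set.Icc 0 1) {t : ℝ} (ht : 0 < t) :
    |stieltjesTransform μ t - μ.real Set.univ / t| ≤ 1 / t ^ 2 * μ.real Set.univ := by
  have hdiff : stieltjesTransform μ t - μ.real Set.univ / t = ∫ x, ((t + x)⁻¹ - t⁻¹) ∂μ := by
    rw [integral_sub (integrable_of_continuousOn_Icc hμ (continuousOn_inv_add ht))
      (integrable_const _), integral_const, smul_eq_mul, stieltjesTransform, div_eq_mul_inv]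
  rw [hdiff, ← Real.norm_eq_abs]
  refine norm_integral_le_of_norm_le_const (hμ.mono fun x ⟨hx₀, hx₁⟩ ↦ ?_)
  have hx : (t + x)⁻¹ - t⁻¹ = -(x / (t * (t + x))) := by field_simp; ring
  rw [hx, norm_neg, Real.norm_of_nonneg (by positivity), sq]
  gcongr
  linarith

lemma summable_stieltjesTransform_sub (hμ : ∀ᵐ x ∂μ, x ∈ Set.Icc 0 1) :
    Summable fun n : ℕ ↦ stieltjesTransform μ n - μ.real Set.univ / n := by
  refine .of_norm_bounded_eventually_nat
    ((Real.summable_one_div_nat_pow.2 one_lt_two).mul_right (μ.real Set.univ)) ?_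
  filter_upwards [eventually_gt_atTop 0] with n hn
  exact abs_stieltjesTransform_sub_le hμ (Nat.cast_pos.2 hn)

lemma hasSum_pow_div_pow_succ {t x : ℝ} (hx : |x| < t) :
    HasSum (fun j : ℕ ↦ (-1) ^ j * x ^ j / t ^ (j + 1)) (t + x)⁻¹ := by
  have ht : 0 < t := (abs_nonneg x).trans_lt hx
  have hratio : |-(x / t)| < 1 := by rwa [abs_neg, abs_div, abs_of_pos ht, div_lt_one ht]
  have hgeom := (hasSum_geometric_of_abs_lt_one hratio).mul_left t⁻¹
  rw [← mul_inv, mul_sub, mul_neg, mul_div_cancel₀ _ ht.ne', mul_one, sub_neg_eq_add] at hgeom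
  refine hgeom.congr_fun fun j ↦ ?_
  rw [neg_pow (x / t), div_pow, pow_succ]
  field_simp

lemma hasSum_moment_stieltjesTransform (hμ : ∀ᵐ x ∂μ, x ∈ Set.Icc 0 1) {t : ℝ} (ht : 1 < t) :
    HasSum (fun j : ℕ ↦ (-1) ^ j * (∫ x, x ^ j ∂μ) / t ^ (j + 1)) (stieltjesTransform μ t) := by
  have hgeom : Summable fun j : ℕ ↦ t⁻¹ ^ (j + 1) :=
    (summable_nat_add_iff 1).2
      (summable_geometric_of_lt_one (by positivity) (inv_lt_one_of_one_lt₀ ht))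
  have hbound (j : ℕ) : ∀ᵐ x ∂μ, ‖(-1) ^ j * x ^ j / t ^ (j + 1)‖ ≤ t⁻¹ ^ (j + 1) := by
    filter_upwards [hμ] with x ⟨hx₀, hx₁⟩
    rw [norm_div, norm_mul, norm_pow, norm_pow, norm_pow, norm_neg, norm_one, one_pow, one_mul,
      Real.norm_of_nonneg hx₀, Real.norm_of_nonneg (by positivity), inv_pow, ← one_div]
    gcongr
    exact pow_le_one₀ hx₀ hx₁
  have hsum := hasSum_integral_of_dominated_convergence (fun j _ ↦ t⁻¹ ^ (j + 1))
    (fun j ↦ Continuous.aestronglyMeasurable (by fun_prop)) hbound (.of_forall fun _ ↦ hgeom)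
    (integrable_const _) (hμ.mono fun x ⟨hx₀, hx₁⟩ ↦
      hasSum_pow_div_pow_succ (by rw [abs_of_nonneg hx₀]; linarith))
  simpa only [stieltjesTransform, integral_div, integral_const_mul] using hsum

lemma hasSum_stieltjesTransform_sub (hμ : ∀ᵐ x ∂μ, x ∈ Set.Icc 0 1)
    (hν : ∀ᵐ x ∂ν, x ∈ Set.Icc 0 1) (hmass : μ.real Set.univ = ν.real Set.univ)
    {t : ℝ} (ht : 1 < t) :
    HasSum (fun j : ℕ ↦ (-1) ^ j * ((∫ x, x ^ (j + 1) ∂μ) - ∫ x, x ^ (j + 1) ∂ν) / t ^ (j + 2))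
      (stieltjesTransform ν t - stieltjesTransform μ t) := by
  have hsum := (hasSum_moment_stieltjesTransform hν ht).sub
    (hasSum_moment_stieltjesTransform hμ ht)
  rw [← hasSum_nat_add_iff' 1] at hsum
  simp only [sum_range_one, pow_zero, integral_const, hmass, sub_self, sub_zero] at hsum
  exact hsum.congr_fun fun j ↦ by ring

end UnitIntervalMeasure

section IrwinMeasure

variable {b d k l : ℕ}

/-- The part of the Irwin measure carried by the digit strings of length `l`: each string with
exactly `k` digits `d`, read as a fraction `n / b ^ l`, has mass `b ^ (-l)`. -/
noncomputable def irwinLevelMeasure (b d k l : ℕ) : Measure ℝ :=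
  ∑ n ∈ digitStrings b d k l, ((b : ℝ≥0) ^ l)⁻¹ • Measure.dirac ((n : ℝ) / (b : ℝ) ^ l)

/-- The Irwin measure, whose moments are `momentU b d k` and whose Stieltjes transform computes
`irwinSum`. -/
noncomputable def irwinMeasure (b d k : ℕ) : Measure ℝ :=
  Measure.sum (irwinLevelMeasure b d k)

lemma integral_irwinLevelMeasure (b d k l : ℕ) (f : ℝ → ℝ) :
    ∫ x, f x ∂irwinLevelMeasure b d k l =
      ((b : ℝ) ^ l)⁻¹ * ∑ n ∈ digitStrings b d k l, f (n / (b : ℝ) ^ l) := by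
  rw [irwinLevelMeasure, integral_finsetSum_measure fun n _ ↦
    (integrable_dirac (by simp)).smul_measure_nnreal, mul_sum]
  simp only [integral_smul_nnreal_measure, integral_dirac, NNReal.smul_def, smul_eq_mul]
  push_cast
  rfl

lemma irwinLevelMeasure_succ_zero (b d k : ℕ) : irwinLevelMeasure b d (k + 1) 0 = 0 := by
  rw [irwinLevelMeasure, digitStrings_succ_zero, sum_empty]

lemma irwinLevelMeasure_univ (b d k l : ℕ) :
    irwinLevelMeasure b d k l Set.univ =
      ENNReal.ofReal (#(digitStrings b d k l) * ((b : ℝ) ^ l)⁻¹) := by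
  have hweight : ((((b : ℝ≥0) ^ l)⁻¹ : ℝ≥0) : ℝ≥0∞) = ENNReal.ofReal ((b : ℝ) ^ l)⁻¹ := by
    rw [← ENNReal.ofReal_coe_nnreal]
    push_cast
    rfl
  simp only [irwinLevelMeasure, Measure.finsetSum_apply, Measure.coe_nnreal_smul_apply,
    measure_univ, mul_one, sum_const, nsmul_eq_mul]
  rw [hweight, ENNReal.ofReal_mul (Nat.cast_nonneg _), ENNReal.ofReal_natCast]

lemma hasSum_card_digitStrings_mul (hb : 1 < b) (hd : d < b) (k : ℕ) :
    HasSum (fun l ↦ (#(digitStrings b d k l) : ℝ) * ((b : ℝ) ^ l)⁻¹) b := by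
  have hb₀ : (0 : ℝ) < b := by positivity
  have hratio : ‖((b : ℝ) - 1) / b‖ < 1 := by
    have hb₁ : (1 : ℝ) < b := mod_cast hb
    rw [Real.norm_of_nonneg (div_nonneg (by linarith) hb₀.le), div_lt_one hb₀]
    linarith
  have hsum := (hasSum_choose_mul_geometric_of_norm_lt_one k hratio).mul_left (((b : ℝ) ^ k)⁻¹)
  have hvanish : ∑ l ∈ range k, (#(digitStrings b d k l) : ℝ) * ((b : ℝ) ^ l)⁻¹ = 0 :=
    sum_eq_zero fun l hl ↦ by
      simp [card_digitStrings hd, Nat.choose_eq_zero_of_lt (mem_range.1 hl)]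
  rw [← hasSum_nat_add_iff' k, hvanish, sub_zero]
  have hvalue : ((b : ℝ) ^ k)⁻¹ * (1 / (1 - ((b : ℝ) - 1) / b) ^ (k + 1)) = b := by
    rw [one_sub_div hb₀.ne', sub_sub_cancel, one_div, one_div, inv_pow, inv_inv, pow_succ]
    field_simp
  rw [hvalue] at hsum
  refine hsum.congr_fun fun l ↦ ?_
  rw [card_digitStrings hd, Nat.add_sub_cancel, Nat.cast_mul, Nat.cast_pow, Nat.cast_sub hb.le,
    Nat.cast_one, div_pow, pow_add]
  field_simp

lemma irwinMeasure_univ (hb : 1 < b) (hd : d < b) : irwinMeasure b d k Set.univ = b := by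
  have hsum := hasSum_card_digitStrings_mul hb hd k
  rw [irwinMeasure, Measure.sum_apply _ .univ]
  simp only [irwinLevelMeasure_univ]
  rw [← ENNReal.ofReal_tsum_of_nonneg (fun l ↦ by positivity) hsum.summable, hsum.tsum_eq,
    ENNReal.ofReal_natCast]

lemma irwinMeasure_real_univ (hb : 1 < b) (hd : d < b) :
    (irwinMeasure b d k).real Set.univ = b := by
  rw [measureReal_def, irwinMeasure_univ hb hd, ENNReal.toReal_natCast]

lemma isFiniteMeasure_irwinMeasure (hb : 1 < b) (hd : d < b) :
    IsFiniteMeasure (irwinMeasure b d k) :=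
  ⟨by simp [irwinMeasure_univ hb hd]⟩

lemma ae_irwinMeasure_mem_Icc (b d k : ℕ) : ∀ᵐ x ∂irwinMeasure b d k, x ∈ Set.Icc 0 1 := by
  rw [irwinMeasure, Measure.ae_sum_iff]
  intro l
  rw [irwinLevelMeasure, ae_finsetSum_measure_iff]
  intro n hn
  refine Measure.ae_smul_measure ((ae_dirac_iff measurableSet_Icc).2 ⟨by positivity, ?_⟩) _
  exact div_le_one_of_le₀ (mod_cast (lt_of_mem_digitStrings hn).le) (by positivity)

lemma hasSum_integral_irwinLevelMeasure (hb : 1 < b) (hd : d < b) {f : ℝ → ℝ}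
    (hf : ContinuousOn f (Set.Icc 0 1)) :
    HasSum (fun l ↦ ∫ x, f x ∂irwinLevelMeasure b d k l) (∫ x, f x ∂irwinMeasure b d k) := by
  have := isFiniteMeasure_irwinMeasure (k := k) hb hd
  have hint : Integrable f (irwinMeasure b d k) :=
    integrable_of_continuousOn_Icc (ae_irwinMeasure_mem_Icc b d k) hf
  exact hasSum_integral_measure hint

lemma momentU_eq_integral (hb : 1 < b) (hd : d < b) (m : ℕ) :
    momentU b d k m = ∫ x, x ^ m ∂irwinMeasure b d k := by
  rw [momentU, ← (hasSum_integral_irwinLevelMeasure hb hd (by fun_prop)).tsum_eq]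
  refine tsum_congr fun l ↦ ?_
  rw [integral_irwinLevelMeasure, ← sum_filter, pow_mul, pow_succ, mul_inv_rev, mul_assoc,
    mul_sum]
  simp only [div_eq_inv_mul, mul_pow, inv_pow]
  rfl

lemma integral_irwinLevelMeasure_succ_succ (hd : d < b) (f : ℝ → ℝ) :
    ∫ x, f x ∂irwinLevelMeasure b d (k + 1) (l + 1) =
      (b : ℝ)⁻¹ * (∫ x, f ((d + x) / b) ∂irwinLevelMeasure b d k l +
        ∑ a ∈ (range b).erase d, ∫ x, f ((a + x) / b) ∂irwinLevelMeasure b d (k + 1) l) := by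
  have hb : (b : ℝ) ≠ 0 := by exact_mod_cast (Nat.zero_lt_of_lt hd).ne'
  have hdigit (a r : ℕ) : ((a * b ^ l + r : ℕ) : ℝ) / (b : ℝ) ^ (l + 1) =
      (a + r / (b : ℝ) ^ l) / b := by
    push_cast
    rw [pow_succ]
    field_simp
  simp only [integral_irwinLevelMeasure, sum_digitStrings_succ_succ hd, hdigit, ← mul_sum,
    ← mul_add]
  rw [pow_succ', mul_inv, mul_assoc]

lemma mapsTo_add_div_Icc {a : ℕ} (ha : a < b) :
    Set.MapsTo (fun x : ℝ ↦ (a + x) / b) (Set.Icc 0 1) (Set.Icc 0 1) := by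
  intro x ⟨hx₀, hx₁⟩
  have hab : (a : ℝ) + 1 ≤ b := mod_cast ha
  exact ⟨by positivity, div_le_one_of_le₀ (by linarith) b.cast_nonneg⟩

lemma integral_irwinMeasure_succ (hb : 1 < b) (hd : d < b) {f : ℝ → ℝ}
    (hf : ContinuousOn f (Set.Icc 0 1)) :
    ∫ x, f x ∂irwinMeasure b d (k + 1) =
      (b : ℝ)⁻¹ * (∫ x, f ((d + x) / b) ∂irwinMeasure b d k +
        ∑ a ∈ (range b).erase d, ∫ x, f ((a + x) / b) ∂irwinMeasure b d (k + 1)) := by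
  have hcomp {a : ℕ} (ha : a < b) : ContinuousOn (fun x : ℝ ↦ f ((a + x) / b)) (Set.Icc 0 1) :=
    hf.comp (by fun_prop) (mapsTo_add_div_Icc ha)
  have hlhs := hasSum_integral_irwinLevelMeasure (k := k + 1) hb hd hf
  rw [← hasSum_nat_add_iff' 1, sum_range_one, irwinLevelMeasure_succ_zero, integral_zero_measure,
    sub_zero] at hlhs
  have hrhs := ((hasSum_integral_irwinLevelMeasure (k := k) hb hd (hcomp hd)).add
    (hasSum_sum fun a ha ↦ hasSum_integral_irwinLevelMeasure (k := k + 1) hb hd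
      (hcomp (mem_range.1 (mem_of_mem_erase (s := range b) (a := d) ha))))).mul_left (b : ℝ)⁻¹
  exact hlhs.unique (hrhs.congr_fun fun l ↦ integral_irwinLevelMeasure_succ_succ hd f)

lemma stieltjesTransform_irwinMeasure_succ (hb : 1 < b) (hd : d < b) {t : ℝ} (ht : 0 < t) :
    stieltjesTransform (irwinMeasure b d (k + 1)) t =
      stieltjesTransform (irwinMeasure b d k) (t * b + d) +
        ∑ a ∈ (range b).erase d, stieltjesTransform (irwinMeasure b d (k + 1)) (t * b + a) := by
  have hb₀ : (b : ℝ) ≠ 0 := by positivity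
  have hscale (a : ℕ) (x : ℝ) : (t + (a + x) / b)⁻¹ = b * (t * b + a + x)⁻¹ := by
    rw [add_assoc, ← inv_inv (b : ℝ), ← mul_inv, inv_inv]; congr 1; field_simp
  simp only [stieltjesTransform, integral_irwinMeasure_succ hb hd (continuousOn_inv_add ht),
    hscale, integral_const_mul, ← mul_sum, ← mul_add, inv_mul_cancel_left₀ hb₀]

end IrwinMeasure

section IrwinSum

variable {b : ℕ}

lemma sum_irwinSum_terms_leading_digit {a : ℕ} (ha₀ : 0 < a) (ha : a < b) (k l : ℕ) :
    ∑ r ∈ range (b ^ l), (if 0 < a * b ^ l + r ∧ (b.digits (a * b ^ l + r)).count 0 = k then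
        (1 : ℝ) / (a * b ^ l + r : ℕ) else 0) =
      ∫ x, ((a : ℝ) + x)⁻¹ ∂irwinLevelMeasure b 0 k l := by
  have hb : 0 < b := ha₀.trans ha
  rw [integral_irwinLevelMeasure, digitStrings, sum_filter, mul_sum]
  refine sum_congr rfl fun r hr ↦ ?_
  have hpos : 0 < a * b ^ l + r := by positivity
  rw [count_digits_mul_pow_add ha₀ ha (mem_range.1 hr), if_neg ha₀.ne', add_zero, mul_ite,
    mul_zero, ← mul_inv, mul_add, mul_div_cancel₀ _ (by positivity)]
  simp only [hpos, true_and, one_div, Nat.cast_add, Nat.cast_mul, Nat.cast_pow,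
    mul_comm (a : ℝ)]

lemma sum_range_pow_irwinSum_terms (hb : 0 < b) (k L : ℕ) :
    ∑ m ∈ range (b ^ L), (if 0 < m ∧ (b.digits m).count 0 = k then (1 : ℝ) / m else 0) =
      ∑ l ∈ range L, ∑ a ∈ Ico 1 b, ∫ x, ((a : ℝ) + x)⁻¹ ∂irwinLevelMeasure b 0 k l := by
  induction L with
  | zero => simp
  | succ L ih =>
    rw [pow_succ', sum_range_mul_eq_sum_sum, range_eq_Ico, sum_eq_sum_Ico_succ_bot hb,
      sum_range_succ, ← ih, add_comm]
    simp only [zero_mul, zero_add]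
    rw [add_comm]
    exact congrArg _ (sum_congr rfl fun a ha ↦
      sum_irwinSum_terms_leading_digit (mem_Ico.1 ha).1 (mem_Ico.1 ha).2 k L)

lemma irwinSum_zero_eq_sum_stieltjesTransform (hb : 1 < b) (k : ℕ) :
    irwinSum b 0 k = ∑ a ∈ Ico 1 b, stieltjesTransform (irwinMeasure b 0 k) a := by
  have hlevels : HasSum
      (fun l ↦ ∑ a ∈ Ico 1 b, ∫ x, ((a : ℝ) + x)⁻¹ ∂irwinLevelMeasure b 0 k l)
      (∑ a ∈ Ico 1 b, stieltjesTransform (irwinMeasure b 0 k) a) :=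
    hasSum_sum fun a ha ↦ hasSum_integral_irwinLevelMeasure hb (by omega)
      (continuousOn_inv_add (Nat.cast_pos.2 (mem_Ico.1 ha).1))
  have hnonneg (m : ℕ) :
      0 ≤ if 0 < m ∧ (b.digits m).count 0 = k then (1 : ℝ) / m else 0 := by positivity
  refine HasSum.tsum_eq ((hasSum_iff_tendsto_nat_of_nonneg hnonneg _).2 ?_)
  refine (tendsto_iff_tendsto_subseq_of_monotone (fun M N hMN ↦ ?_)
    (tendsto_pow_atTop_atTop_of_one_lt hb)).2 ?_
  · exact sum_le_sum_of_subset_of_nonneg (range_mono hMN) fun m _ _ ↦ hnonneg m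
  · exact hlevels.tendsto_sum_nat.congr fun L ↦
      (sum_range_pow_irwinSum_terms (zero_lt_one.trans hb) k L).symm

lemma stieltjesTransform_irwinMeasure_zero_succ (hb : 1 < b) (k : ℕ) {n : ℕ} (hn : 0 < n) :
    stieltjesTransform (irwinMeasure b 0 (k + 1)) n =
      stieltjesTransform (irwinMeasure b 0 k) (n * b : ℕ) +
        ∑ a ∈ Ico 1 b, stieltjesTransform (irwinMeasure b 0 (k + 1)) (n * b + a : ℕ) := by
  have hdigits : (range b).erase 0 = Ico 1 b := by
    ext a
    simp only [mem_erase, mem_range, mem_Ico]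
    omega
  rw [stieltjesTransform_irwinMeasure_succ hb (by omega) (Nat.cast_pos.2 hn), hdigits]
  simp

end IrwinSum

section Zeta

lemma summable_one_div_succ_pow {s : ℕ} (hs : 1 < s) :
    Summable fun n : ℕ ↦ 1 / ((n : ℝ) + 1) ^ s := by
  simpa using (summable_nat_add_iff 1).2 (Real.summable_one_div_nat_pow.2 hs)

lemma summable_mul_one_div_succ_pow {w : ℕ → ℝ} (hw : Summable w) :
    Summable fun p : ℕ × ℕ ↦ w p.1 * (1 / ((p.2 : ℝ) + 1) ^ (p.1 + 2)) := by
  refine .of_norm_bounded (hw.abs.mul_of_nonneg (summable_one_div_succ_pow one_lt_two)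
    (fun _ ↦ abs_nonneg _) fun _ ↦ by positivity) fun ⟨j, n⟩ ↦ ?_
  rw [norm_mul, Real.norm_eq_abs, Real.norm_of_nonneg (by positivity)]
  gcongr
  · linarith [n.cast_nonneg (α := ℝ)]
  · omega

lemma hasSum_mul_zetaR {w g : ℕ → ℝ} (hw : Summable w)
    (hg : ∀ n : ℕ, HasSum (fun j ↦ w j * (1 / ((n : ℝ) + 1) ^ (j + 2))) (g n)) :
    ∃ T, HasSum (fun j ↦ w j * zetaR (j + 2)) T ∧ HasSum g T := by
  have hdouble := (summable_mul_one_div_succ_pow hw).hasSum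
  have hrow (j : ℕ) : HasSum (fun n : ℕ ↦ w j * (1 / ((n : ℝ) + 1) ^ (j + 2)))
      (w j * zetaR (j + 2)) :=
    (summable_one_div_succ_pow (by omega)).hasSum.mul_left (w j)
  exact ⟨_, hdouble.prod_fiberwise hrow,
    ((Equiv.prodComm ℕ ℕ).hasSum_iff.2 hdouble).prod_fiberwise hg⟩

end Zeta

section LogAsymptotics

lemma tendsto_sum_range_inv_sub_log :
    Tendsto (fun N : ℕ ↦ ∑ n ∈ range N, (n : ℝ)⁻¹ - Real.log N) atTop
      (𝓝 Real.eulerMascheroniConstant) := by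
  have hsum (N : ℕ) : ∑ n ∈ range N, (n : ℝ)⁻¹ = harmonic N - (N : ℝ)⁻¹ := by
    rw [eq_sub_iff_add_eq, ← sum_range_succ, sum_range_succ', harmonic]
    simp
  have hlim := Real.tendsto_harmonic_sub_log.sub (tendsto_inv_atTop_nhds_zero_nat (𝕜 := ℝ))
  rw [sub_zero] at hlim
  exact hlim.congr fun N ↦ by rw [hsum]; ring

lemma tendsto_sum_Ico_mul {u : ℕ → ℝ} {c : ℝ} (hu : Summable fun n : ℕ ↦ u n - c / n)
    {b : ℕ} (hb : 0 < b) :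
    Tendsto (fun N ↦ ∑ n ∈ Ico N (N * b), u n) atTop (𝓝 (c * Real.log b)) := by
  have hlim := hu.hasSum.tendsto_sum_nat.add (tendsto_sum_range_inv_sub_log.const_mul c)
  have hdiff := ((hlim.comp (tendsto_id.atTop_mul_const' hb)).sub hlim).add_const (c * Real.log b)
  rw [sub_self, zero_add] at hdiff
  refine hdiff.congr' ?_
  filter_upwards [eventually_gt_atTop 0] with N hN
  have hlog : Real.log ((N * b : ℕ) : ℝ) = Real.log N + Real.log b := by
    rw [Nat.cast_mul, Real.log_mul (by positivity) (by positivity)]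
  simp only [Function.comp_apply, id, sum_Ico_eq_sub _ (Nat.le_mul_of_pos_right N hb),
    sum_sub_distrib, div_eq_mul_inv, ← mul_sum, hlog]
  ring

end LogAsymptotics

section Telescoping

variable {b : ℕ}

lemma sum_Ico_one_eq_of_recurrence {M : Type*} [AddCommGroup M] {u v : ℕ → M} (hb : 1 < b)
    (hrec : ∀ n, 0 < n → u n = v (n * b) + ∑ a ∈ Ico 1 b, u (n * b + a)) (N : ℕ) :
    ∑ a ∈ Ico 1 b, u a = ∑ m ∈ Ico (N + 1) ((N + 1) * b), u m +
      ∑ n ∈ range N, (v ((n + 1) * b) - u ((n + 1) * b)) := by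
  induction N with
  | zero => simp
  | succ N ih =>
    have hlt : N + 1 < (N + 1) * b := lt_mul_of_one_lt_right N.succ_pos hb
    have hblock : ∑ m ∈ Ico ((N + 1) * b) ((N + 2) * b), u m =
        u ((N + 1) * b) + (u (N + 1) - v ((N + 1) * b)) := by
      rw [hrec (N + 1) N.succ_pos, add_sub_cancel_left, sum_Ico_eq_sum_range, ← Nat.sub_mul,
        show N + 2 - (N + 1) = 1 by omega, one_mul, range_eq_Ico,
        sum_eq_sum_Ico_succ_bot (by omega), add_zero]
    have hshift : ∑ m ∈ Ico (N + 1) ((N + 1) * b), u m +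
          ∑ m ∈ Ico ((N + 1) * b) ((N + 2) * b), u m =
        u (N + 1) + ∑ m ∈ Ico (N + 2) ((N + 2) * b), u m := by
      rw [sum_Ico_consecutive _ hlt.le (by gcongr; omega), sum_eq_sum_Ico_succ_bot]
      exact hlt.trans (by gcongr; omega)
    rw [ih, sum_range_succ, eq_sub_of_add_eq hshift, hblock]
    abel

lemma sum_Ico_one_eq_log_add {u v : ℕ → ℝ} {c T : ℝ} (hb : 1 < b)
    (hrec : ∀ n, 0 < n → u n = v (n * b) + ∑ a ∈ Ico 1 b, u (n * b + a))
    (hu : Summable fun n : ℕ ↦ u n - c / n)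
    (hT : HasSum (fun n : ℕ ↦ v ((n + 1) * b) - u ((n + 1) * b)) T) :
    ∑ a ∈ Ico 1 b, u a = c * Real.log b + T := by
  have hblock := (tendsto_sum_Ico_mul hu (zero_lt_one.trans hb)).comp (tendsto_add_atTop_nat 1)
  exact tendsto_nhds_unique
    (tendsto_const_nhds.congr (sum_Ico_one_eq_of_recurrence hb hrec))
    (hblock.add hT.tendsto_sum_nat)

end Telescoping

lemma hasSum_zetaR_mul_momentU_sub {b d : ℕ} (hb : 1 < b) (hd : d < b) (k l : ℕ) :
    ∃ T, HasSum (fun j : ℕ ↦ (-1) ^ j * zetaR (j + 2) *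
        (momentU b d k (j + 1) - momentU b d l (j + 1)) / (b : ℝ) ^ (j + 2)) T ∧
      HasSum (fun n : ℕ ↦ stieltjesTransform (irwinMeasure b d l) ((n + 1) * b : ℕ) -
        stieltjesTransform (irwinMeasure b d k) ((n + 1) * b : ℕ)) T := by
  have := isFiniteMeasure_irwinMeasure (k := k) hb hd
  have := isFiniteMeasure_irwinMeasure (k := l) hb hd
  have hmoments {t : ℝ} (ht : 1 < t) := hasSum_stieltjesTransform_sub
    (ae_irwinMeasure_mem_Icc b d k) (ae_irwinMeasure_mem_Icc b d l)
    (by rw [irwinMeasure_real_univ hb hd, irwinMeasure_real_univ hb hd]) ht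
  simp only [← momentU_eq_integral hb hd] at hmoments
  have hrow (n : ℕ) := hmoments (t := ((n + 1) * b : ℕ))
    (mod_cast hb.trans_le (Nat.le_mul_of_pos_left b n.succ_pos))
  obtain ⟨T, hzeta, hT⟩ := hasSum_mul_zetaR (hmoments (t := b) (mod_cast hb)).summable fun n ↦
    (hrow n).congr_fun fun j ↦ by push_cast; rw [mul_pow]; field_simp
  exact ⟨T, hzeta.congr_fun fun j ↦ by ring, hT⟩

/-- Exact convergent series (indexed so that `m ≥ 1` corresponds to `m = j + 1`):
`I(b,0,k) = b log b + ∑_{m≥1} (−1)^{m−1} ζ(m+1)(u_{k;m}(b,0) − u_{k−1;m}(b,0)) / b^{m+1}`,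
the series converging absolutely. -/
theorem irwin_zero_k_series (b k : ℕ) (hb : 2 ≤ b) (hk : 1 ≤ k) :
    Summable (fun j : ℕ =>
      |(-1 : ℝ) ^ j * zetaR (j + 2) * (momentU b 0 k (j + 1) - momentU b 0 (k - 1) (j + 1))
        / (b : ℝ) ^ (j + 2)|) ∧
    irwinSum b 0 k = (b : ℝ) * Real.log b +
      ∑' j : ℕ, (-1 : ℝ) ^ j * zetaR (j + 2) *
        (momentU b 0 k (j + 1) - momentU b 0 (k - 1) (j + 1)) / (b : ℝ) ^ (j + 2) := by
  obtain ⟨k, rfl⟩ := Nat.exists_eq_add_of_le' hk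
  obtain ⟨T, hzeta, hT⟩ := hasSum_zetaR_mul_momentU_sub (d := 0) hb (by omega) (k + 1) k
  have := isFiniteMeasure_irwinMeasure (k := k + 1) hb (d := 0) (by omega)
  have hsub := summable_stieltjesTransform_sub (ae_irwinMeasure_mem_Icc b 0 (k + 1))
  rw [irwinMeasure_real_univ hb (by omega)] at hsub
  refine ⟨hzeta.summable.abs, ?_⟩
  rw [Nat.add_sub_cancel, hzeta.tsum_eq, irwinSum_zero_eq_sum_stieltjesTransform hb]
  exact sum_Ico_one_eq_log_add (u := fun n ↦ stieltjesTransform (irwinMeasure b 0 (k + 1)) n)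
    (v := fun n ↦ stieltjesTransform (irwinMeasure b 0 k) n) hb
    (fun n hn ↦ stieltjesTransform_irwinMeasure_zero_succ hb k hn) hsub hT
end

section
/- For all integers b, d with 0 < d < b, the exact convergent-series identity holds: I(b,d,1) = b·log b + ∑_{m=1}^∞ (−1)^{m−1}(u_{1;m}(b,d) − u_{0;m}(b,d))·( ∑_{n=1}^∞ 1/(bn + d)^{m+1} + ∑_{0 ≤ a < b, a ≠ d} 1/(bd + a)^{m+1} ) + 1/(bd + d) + ∑_{m=1}^∞ (−1)^{m−1} u_{0;m}(b,d)/(bd + d)^{m+1}, where all the series converge. -/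
open Filter Asymptotics

/-! The Irwin measure `μₖ` gives mass `b ^ (-l)` to every word of length `l` with exactly `k`
letters `d`, read as a base-`b` expansion in `[0, 1]`. Its moments are the `momentU b d k m`, and
for an integer `y ≥ 1` its Stieltjes transform `Sₖ(y) = ∫ dμₖ(x) / (y + x)` is the sum of `1 / m`
over the integers `m` whose digits are those of `y` followed by such a word.

Splitting words by their first letter gives `Sₖ₊₁(y) = Sₖ(b y + d) + ∑_{a ≠ d} Sₖ₊₁(b y + a)`, so
`∑_{n ≤ m < b n} Sₖ₊₁(m)` changes by `Sₖ₊₁(b n + d) - Sₖ(b n + d)` from `n` to `n + 1`. At `n = 1`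
this block sum is `I(b, d, k + 1)` up to the term at `d`, and as `n → ∞` it tends to `b log b`
because every `μₖ` has total mass `b`. Telescoping expresses `I(b, d, k + 1)` through the values
`Sₖ(b n + d) - Sₖ₊₁(b n + d)`, which expand in powers of `1 / (b n + d)` with the moments as
coefficients. The expansion is not available at `n = 0`, where the node `d` may be `1`; there, for
`k = 0`, one more splitting moves the nodes to `b d + a`. -/

namespace Irwin

open Finset MeasureTheory

open scoped Topology ENNReal

theorem sum_range_mul {M : Type*} [AddCommMonoid M] (f : ℕ → M) (p q : ℕ) :
    ∑ n ∈ range (p * q), f n = ∑ a ∈ range p, ∑ t ∈ range q, f (a * q + t) := by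
  induction p with
  | zero => simp
  | succ p ih => rw [Nat.succ_mul, sum_range_add, ih, sum_range_succ]

theorem sum_Ico_add_one_mul {M : Type*} [AddCommMonoid M] (f : ℕ → M) {b n : ℕ}
    (hb : 0 < b) :
    f n + ∑ m ∈ Ico (n + 1) (b * (n + 1)), f m =
      ∑ m ∈ Ico n (b * n), f m + ∑ a ∈ range b, f (b * n + a) := by
  have hn : n ≤ b * n := Nat.le_mul_of_pos_left n hb
  rw [← sum_eq_sum_Ico_succ_bot (by rw [mul_add]; omega), mul_add_one,
    ← sum_Ico_consecutive f hn (Nat.le_add_right _ _), sum_Ico_eq_sum_range f (b * n),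
    Nat.add_sub_cancel_left]

theorem hasSum_of_hasSum_sum_Ico {f : ℕ → ℝ} (hf : ∀ n, 0 ≤ f n) {u : ℕ → ℕ}
    (hu : Monotone u) (hu_top : Tendsto u atTop atTop) {s : ℝ}
    (h : HasSum (fun l => ∑ n ∈ Ico (u l) (u (l + 1)), f n) s) :
    HasSum f (∑ n ∈ range (u 0), f n + s) := by
  have partial_sum (L : ℕ) : ∑ n ∈ range (u 0), f n +
      ∑ l ∈ range L, ∑ n ∈ Ico (u l) (u (l + 1)), f n = ∑ n ∈ range (u L), f n := by
    induction L with
    | zero => simp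
    | succ L ih => rw [sum_range_succ, ← add_assoc, ih, sum_range_add_sum_Ico _ (hu L.le_succ)]
  have mono : Monotone fun n => ∑ m ∈ range n, f m := fun i j hij =>
    sum_le_sum_of_subset_of_nonneg (range_mono hij) fun m _ _ => hf m
  rw [hasSum_iff_tendsto_nat_of_nonneg hf]
  exact (tendsto_iff_tendsto_subseq_of_monotone mono hu_top).2
    ((h.tendsto_sum_nat.const_add _).congr partial_sum)

theorem tendsto_sum_Ico_mul_one_div_add_one {b : ℕ} (hb : 0 < b) :
    Tendsto (fun N : ℕ => ∑ n ∈ Ico N (b * N), 1 / ((n : ℝ) + 1)) atTop (𝓝 (Real.log b)) := by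
  have hγ := Real.tendsto_harmonic_sub_log
  have hlim := ((hγ.comp (tendsto_id.const_mul_atTop' hb)).sub hγ).add_const (Real.log b)
  rw [sub_self, zero_add] at hlim
  refine hlim.congr' ?_
  filter_upwards [eventually_gt_atTop 0] with N hN
  have hlog : Real.log (b * N : ℕ) = Real.log b + Real.log N := by
    rw [Nat.cast_mul, Real.log_mul (by positivity) (by positivity)]
  have hsum : ∑ n ∈ Ico N (b * N), 1 / ((n : ℝ) + 1) = harmonic (b * N) - harmonic N := by
    rw [sum_Ico_eq_sub _ (Nat.le_mul_of_pos_left N hb)]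
    simp [harmonic]
  simp only [Function.comp_apply, id_eq, hlog, hsum]
  ring

theorem tendsto_sum_Ico_mul_one_div {b : ℕ} (hb : 0 < b) :
    Tendsto (fun N : ℕ => ∑ n ∈ Ico N (b * N), 1 / (n : ℝ)) atTop (𝓝 (Real.log b)) := by
  have hinv : Tendsto (fun N : ℕ => 1 / (N : ℝ)) atTop (𝓝 0) := tendsto_one_div_atTop_nhds_zero_nat
  have hlim := (tendsto_sum_Ico_mul_one_div_add_one hb).add
    (hinv.sub (hinv.comp (tendsto_id.const_mul_atTop' hb)))
  rw [sub_zero, add_zero] at hlim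
  refine hlim.congr fun N => ?_
  have htele := sum_Ico_sub (fun n : ℕ => 1 / (n : ℝ)) (Nat.le_mul_of_pos_left N hb)
  simp only [sum_sub_distrib, Nat.cast_add_one] at htele
  simp only [Function.comp_apply, id_eq]
  linarith

theorem tendsto_sum_Ico_mul_of_le_of_le {f : ℕ → ℝ} {c : ℝ}
    (hle : ∀ n : ℕ, 0 < n → c / (n + 1) ≤ f n) (hge : ∀ n : ℕ, 0 < n → f n ≤ c / n)
    {b : ℕ} (hb : 0 < b) :
    Tendsto (fun N : ℕ => ∑ n ∈ Ico N (b * N), f n) atTop (𝓝 (c * Real.log b)) := by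
  refine tendsto_of_tendsto_of_tendsto_of_le_of_le'
    ((tendsto_sum_Ico_mul_one_div_add_one hb).const_mul c)
    ((tendsto_sum_Ico_mul_one_div hb).const_mul c) ?_ ?_
  · filter_upwards [eventually_gt_atTop 0] with N hN
    rw [mul_sum]
    exact sum_le_sum fun n hn =>
      (mul_one_div c _).trans_le (hle n (hN.trans_le (mem_Ico.1 hn).1))
  · filter_upwards [eventually_gt_atTop 0] with N hN
    rw [mul_sum]
    exact sum_le_sum fun n hn =>
      (hge n (hN.trans_le (mem_Ico.1 hn).1)).trans_eq (mul_one_div c _).symm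

theorem summable_one_div_mul_add_pow {b c : ℝ} (hb : 0 < b) (hc : 0 ≤ c) {p : ℕ} (hp : 1 < p) :
    Summable fun n : ℕ => 1 / (b * (n + 1) + c) ^ p := by
  refine .of_nonneg_of_le (fun n => by positivity) (fun n => ?_)
    (((summable_nat_add_iff 1).2 (Real.summable_one_div_nat_pow.2 hp)).mul_left (1 / b ^ p))
  rw [one_div_mul_one_div, ← mul_pow]
  push_cast
  gcongr
  linarith

theorem hasSum_mul_tsum_pow {ι 𝕜 : Type*} [NormedField 𝕜] [CompleteSpace 𝕜]
    {c : ℕ → 𝕜} {C : ℝ} (hc : ∀ j, ‖c j‖ ≤ C) {x : ι → 𝕜} {r : ℝ} (hr₀ : 0 ≤ r) (hr₁ : r < 1)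
    (hxr : ∀ i, ‖x i‖ ≤ r) {p : ℕ} (hx : Summable fun i => ‖x i‖ ^ p) {g : ι → 𝕜}
    (hg : ∀ i, HasSum (fun j => c j * x i ^ (j + p)) (g i)) :
    HasSum (fun j => c j * ∑' i, x i ^ (j + p)) (∑' i, g i) := by
  have hbound : Summable fun q : ℕ × ι => C * (r ^ q.1 * ‖x q.2‖ ^ p) :=
    ((summable_geometric_of_lt_one hr₀ hr₁).mul_of_nonneg hx (fun _ => by positivity)
      fun _ => by positivity).mul_left C
  have hsum : Summable fun q : ℕ × ι => c q.1 * x q.2 ^ (q.1 + p) := by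
    refine hbound.of_norm_bounded fun q => ?_
    rw [norm_mul, norm_pow, pow_add]
    gcongr
    exacts [(norm_nonneg _).trans (hc 0), hc _, hxr _]
  have hrow := hsum.hasSum.prod_fiberwise fun j => (hsum.prod_factor j).hasSum
  simp only [tsum_mul_left] at hrow
  have hswap : ∑' i, g i = ∑' q : ℕ × ι, c q.1 * x q.2 ^ (q.1 + p) := by
    rw [hsum.tsum_prod, ← hsum.tsum_comm (f := fun j i => c j * x i ^ (j + p))]
    exact tsum_congr fun i => (hg i).tsum_eq.symm
  rwa [hswap]

theorem hasSum_one_div_sub_one_div_add {x y : ℝ} (hy : 0 < y) (hxy : |x| < y) :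
    HasSum (fun j : ℕ => (-1) ^ j * x ^ (j + 1) / y ^ (j + 2)) (1 / y - 1 / (y + x)) := by
  have hratio : ‖-(x / y)‖ < 1 := by
    rwa [norm_neg, norm_div, Real.norm_eq_abs, Real.norm_of_nonneg hy.le, div_lt_one hy]
  have hyx : y + x ≠ 0 := by linarith [neg_abs_le x]
  convert! (hasSum_geometric_of_norm_lt_one hratio).mul_left (x / y ^ 2) using 1
  · ext j
    rw [neg_pow (x / y), div_pow]
    field_simp
    ring
  · rw [sub_neg_eq_add, one_add_div hy.ne']
    field_simp
    ring

/-- The Stieltjes transform `∫ dμ(x) / (y + x)`, with the sign convention that makes it positive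
and decreasing in `y > 0` when `μ` is carried by `[0, 1]`. -/
noncomputable def stieltjes (μ : Measure ℝ) (y : ℝ) : ℝ :=
  ∫ x, 1 / (y + x) ∂μ

section Stieltjes

variable {μ : Measure ℝ}

theorem ae_norm_pow_le_one (hμ : ∀ᵐ x ∂μ, x ∈ Set.Icc (0 : ℝ) 1) (m : ℕ) :
    ∀ᵐ x ∂μ, ‖x ^ m‖ ≤ 1 := by
  filter_upwards [hμ] with x ⟨hx0, hx1⟩
  rw [Real.norm_of_nonneg (pow_nonneg hx0 m)]
  exact pow_le_one₀ hx0 hx1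

variable [IsFiniteMeasure μ]

theorem integrable_pow (hμ : ∀ᵐ x ∂μ, x ∈ Set.Icc (0 : ℝ) 1) (m : ℕ) :
    Integrable (fun x => x ^ m) μ :=
  .of_bound (by fun_prop) 1 (ae_norm_pow_le_one hμ m)

theorem abs_integral_pow_le (hμ : ∀ᵐ x ∂μ, x ∈ Set.Icc (0 : ℝ) 1) (m : ℕ) :
    |∫ x, x ^ m ∂μ| ≤ μ.real Set.univ := by
  simpa using norm_integral_le_of_norm_le_const (ae_norm_pow_le_one hμ m)

theorem integrable_one_div_add (hμ : ∀ᵐ x ∂μ, x ∈ Set.Icc (0 : ℝ) 1) {y : ℝ} (hy : 0 < y) :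
    Integrable (fun x => 1 / (y + x)) μ := by
  refine .of_bound (Measurable.aestronglyMeasurable (by fun_prop)) (1 / y) ?_
  filter_upwards [hμ] with x hx
  have hx0 := hx.1
  rw [Real.norm_of_nonneg (by positivity)]
  gcongr
  linarith

theorem div_add_one_le_stieltjes (hμ : ∀ᵐ x ∂μ, x ∈ Set.Icc (0 : ℝ) 1) {y : ℝ} (hy : 0 < y) :
    μ.real Set.univ / (y + 1) ≤ stieltjes μ y := by
  calc μ.real Set.univ / (y + 1) = ∫ _, 1 / (y + 1) ∂μ := by simp [div_eq_mul_inv]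
    _ ≤ stieltjes μ y := by
      refine integral_mono_ae (integrable_const _) (integrable_one_div_add hμ hy) ?_
      filter_upwards [hμ] with x ⟨hx0, hx1⟩
      gcongr

theorem stieltjes_le_div (hμ : ∀ᵐ x ∂μ, x ∈ Set.Icc (0 : ℝ) 1) {y : ℝ} (hy : 0 < y) :
    stieltjes μ y ≤ μ.real Set.univ / y := by
  calc stieltjes μ y ≤ ∫ _, 1 / y ∂μ := by
        refine integral_mono_ae (integrable_one_div_add hμ hy) (integrable_const _) ?_
        filter_upwards [hμ] with x ⟨hx0, _⟩
        gcongr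
        linarith
    _ = μ.real Set.univ / y := by simp [div_eq_mul_inv]

theorem hasSum_integral_pow_div_pow (hμ : ∀ᵐ x ∂μ, x ∈ Set.Icc (0 : ℝ) 1) {y : ℝ} (hy : 1 < y) :
    HasSum (fun j : ℕ => (-1) ^ j * (∫ x, x ^ (j + 1) ∂μ) / y ^ (j + 2))
      (μ.real Set.univ / y - stieltjes μ y) := by
  have hy0 : 0 < y := zero_lt_one.trans hy
  have hgeom : Summable fun j : ℕ => (1 / y) ^ (j + 2) :=
    (summable_nat_add_iff 2).2
      (summable_geometric_of_lt_one (by positivity) ((div_lt_one hy0).2 hy))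
  have hexchange : HasSum (fun j : ℕ => ∫ x, (-1) ^ j * x ^ (j + 1) / y ^ (j + 2) ∂μ)
      (∫ x, (1 / y - 1 / (y + x)) ∂μ) := by
    refine hasSum_integral_of_dominated_convergence (fun j _ => (1 / y) ^ (j + 2))
      (fun j => by fun_prop) (fun j => ?_) (.of_forall fun _ => hgeom) (integrable_const _) ?_
    · filter_upwards [hμ] with x ⟨hx0, hx1⟩
      rw [norm_div, norm_mul, norm_pow, norm_neg, norm_one, one_pow, one_mul, one_div_pow,
        Real.norm_of_nonneg (by positivity), Real.norm_of_nonneg (by positivity)]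
      gcongr
      exact pow_le_one₀ hx0 hx1
    · filter_upwards [hμ] with x ⟨hx0, hx1⟩
      exact hasSum_one_div_sub_one_div_add hy0 (by rw [abs_of_nonneg hx0]; linarith)
  have hvalue : ∫ x, (1 / y - 1 / (y + x)) ∂μ = μ.real Set.univ / y - stieltjes μ y := by
    rw [integral_sub (integrable_const _) (integrable_one_div_add hμ hy0), stieltjes]
    simp [div_eq_mul_inv]
  simpa only [hvalue, integral_div, integral_const_mul] using hexchange

end Stieltjes

/-- The number of digits `d` among the `l` lowest base-`b` digits of `n`, leading zeros included. -/
def digitCount (b d l n : ℕ) : ℕ := #{i ∈ range l | n / b ^ i % b = d}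

/-- The words of length `l` over the base-`b` digits with exactly `k` letters `d`, each encoded as
the integer below `b ^ l` that it spells; leading zeros are letters. -/
def words (b d k l : ℕ) : Finset ℕ := {n ∈ range (b ^ l) | digitCount b d l n = k}

section Words

variable {b d : ℕ}

theorem digitCount_mul_pow_add {a l t : ℕ} (ha : a < b) (ht : t < b ^ l) :
    digitCount b d (l + 1) (a * b ^ l + t) = digitCount b d l t + if a = d then 1 else 0 := by
  have hb : 0 < b := by omega
  have top_digit : (a * b ^ l + t) / b ^ l % b = a := by
    rw [add_comm, Nat.add_mul_div_right _ _ (by positivity), Nat.div_eq_of_lt ht, zero_add,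
      Nat.mod_eq_of_lt ha]
  have low_digit (i : ℕ) (hi : i < l) : (a * b ^ l + t) / b ^ i % b = t / b ^ i % b := by
    obtain ⟨e, rfl⟩ := Nat.exists_eq_add_of_lt hi
    have hsplit : a * b ^ (i + e + 1) + t = t + b ^ i * (b * (a * b ^ e)) := by ring
    rw [hsplit, Nat.add_mul_div_left _ _ (by positivity), Nat.add_mul_mod_self_left]
  simp only [digitCount, card_filter, sum_range_succ, top_digit]
  congr 1
  exact sum_congr rfl fun i hi => by rw [low_digit i (mem_range.1 hi)]

theorem digitCount_succ (b d l n : ℕ) :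
    digitCount b d (l + 1) n = digitCount b d l (n / b) + if n % b = d then 1 else 0 := by
  simp only [digitCount, card_filter, sum_range_succ', Nat.div_div_eq_div_mul, pow_succ', pow_zero,
    Nat.div_one]

theorem count_digits_eq_digitCount (hb : 1 < b) {l n : ℕ} (hle : b ^ l ≤ n)
    (hlt : n < b ^ (l + 1)) : (Nat.digits b n).count d = digitCount b d (l + 1) n := by
  induction l generalizing n with
  | zero =>
    simp only [pow_zero, zero_add, pow_one] at hle hlt
    rw [Nat.digits_of_lt b n (by omega) hlt, digitCount_succ, Nat.mod_eq_of_lt hlt]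
    simp [digitCount, List.count_cons]
  | succ l ih =>
    have hn : 0 < n := lt_of_lt_of_le (by positivity) hle
    rw [Nat.digits_def' hb hn, List.count_cons, digitCount_succ, ih]
    · simp
    · rwa [Nat.le_div_iff_mul_le (by omega), ← pow_succ]
    · rwa [Nat.div_lt_iff_lt_mul (by omega), ← pow_succ]

theorem filter_Ico_pow_count_digits (hb : 1 < b) (k l : ℕ) :
    {n ∈ Ico (b ^ l) (b ^ (l + 1)) | 0 < n ∧ (Nat.digits b n).count d = k} =
      {n ∈ words b d k (l + 1) | b ^ l ≤ n} := by
  have hpow : 0 < b ^ l := by positivity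
  ext n
  simp only [words, mem_filter, mem_Ico, mem_range]
  constructor
  · rintro ⟨⟨hle, hlt⟩, -, hcount⟩
    exact ⟨⟨hlt, count_digits_eq_digitCount hb hle hlt ▸ hcount⟩, hle⟩
  · rintro ⟨⟨hlt, hcount⟩, hle⟩
    exact ⟨⟨hle, hlt⟩, hpow.trans_le hle, count_digits_eq_digitCount hb hle hlt ▸ hcount⟩

theorem words_length_zero (b d : ℕ) : words b d 0 0 = {0} := by simp [words, digitCount]

theorem words_succ_length_zero (b d k : ℕ) : words b d (k + 1) 0 = ∅ := by
  simp [words, digitCount]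

variable {M : Type*} [AddCommMonoid M]

theorem sum_words_length_succ (b d k l : ℕ) (f : ℕ → M) :
    ∑ n ∈ words b d k (l + 1), f n = ∑ a ∈ range b, ∑ t ∈ range (b ^ l),
      if (digitCount b d l t + if a = d then 1 else 0) = k then f (a * b ^ l + t) else 0 := by
  rw [words, sum_filter, pow_succ', sum_range_mul]
  refine sum_congr rfl fun a ha => sum_congr rfl fun t ht => ?_
  rw [digitCount_mul_pow_add (mem_range.1 ha) (mem_range.1 ht)]

theorem sum_words_zero_length_succ (hdb : d < b) (l : ℕ) (f : ℕ → M) :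
    ∑ n ∈ words b d 0 (l + 1), f n =
      ∑ a ∈ (range b).erase d, ∑ t ∈ words b d 0 l, f (a * b ^ l + t) := by
  rw [sum_words_length_succ, ← add_sum_erase _ _ (mem_range.2 hdb)]
  simp only [if_true, Nat.add_one_ne_zero, if_false, sum_const_zero, zero_add, words, sum_filter]
  refine sum_congr rfl fun a ha => ?_
  simp only [ne_of_mem_erase ha, if_false, add_zero]

theorem sum_words_succ_length_succ (hdb : d < b) (k l : ℕ) (f : ℕ → M) :
    ∑ n ∈ words b d (k + 1) (l + 1), f n =
      ∑ t ∈ words b d k l, f (d * b ^ l + t) +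
        ∑ a ∈ (range b).erase d, ∑ t ∈ words b d (k + 1) l, f (a * b ^ l + t) := by
  rw [sum_words_length_succ, ← add_sum_erase _ _ (mem_range.2 hdb)]
  simp only [if_true, add_left_inj, words, sum_filter]
  congr 1
  refine sum_congr rfl fun a ha => ?_
  simp only [ne_of_mem_erase ha, if_false, add_zero]

theorem card_words (hdb : d < b) (k l : ℕ) :
    #(words b d k l) = l.choose k * (b - 1) ^ (l - k) := by
  have hcard : #((range b).erase d) = b - 1 := by
    rw [card_erase_of_mem (mem_range.2 hdb), card_range]
  induction l generalizing k with
  | zero => cases k <;> simp [words_length_zero, words_succ_length_zero]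
  | succ l ih =>
    rw [card_eq_sum_ones]
    cases k with
    | zero =>
      rw [sum_words_zero_length_succ hdb]
      simp only [ih, sum_const, hcard, smul_eq_mul, Nat.choose_zero_right, one_mul, mul_one,
        Nat.sub_zero, pow_succ']
    | succ k =>
      rw [sum_words_succ_length_succ hdb]
      simp only [ih, sum_const, hcard, smul_eq_mul, mul_one, Nat.choose_succ_succ',
        Nat.add_sub_add_right, add_mul]
      congr 1
      rcases lt_or_ge k l with hkl | hlk
      · obtain ⟨e, rfl⟩ := Nat.exists_eq_add_of_lt hkl
        rw [show k + e + 1 - (k + 1) = e by omega, show k + e + 1 - k = e + 1 by omega]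
        ring
      · simp [Nat.choose_eq_zero_of_lt (Nat.lt_succ_of_le hlk)]

theorem hasSum_card_words_div (hdb : d < b) (k : ℕ) :
    HasSum (fun l => (#(words b d k l) : ℝ) / b ^ l) b := by
  have hb : 0 < b := by omega
  have hb1 : (1 : ℝ) ≤ b := by exact_mod_cast hb
  have hratio : ‖((b : ℝ) - 1) / b‖ < 1 := by
    rw [Real.norm_of_nonneg (div_nonneg (by linarith) (by linarith)), div_lt_one (by linarith)]
    linarith
  have hshort : ∑ l ∈ range k, (#(words b d k l) : ℝ) / b ^ l = 0 := sum_eq_zero fun l hl => by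
    simp [card_words hdb, Nat.choose_eq_zero_of_lt (mem_range.1 hl)]
  rw [← hasSum_nat_add_iff' k, hshort, sub_zero]
  convert! (hasSum_choose_mul_geometric_of_norm_lt_one k hratio).div_const ((b : ℝ) ^ k) using 1
  · ext l
    rw [card_words hdb, Nat.add_sub_cancel, div_pow, pow_add]
    push_cast [Nat.cast_sub hb]
    field_simp
  · rw [one_sub_div (by positivity), sub_sub_cancel, one_div_pow, pow_succ]
    field_simp

end Words

/-- The Irwin measure: every word of length `l` with exactly `k` letters `d` puts a mass `b ^ (-l)`
at the point of `[0, 1]` with this word as base-`b` expansion. -/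
noncomputable def irwinMeasure (b d k : ℕ) : Measure ℝ :=
  .sum fun l => ((b : ℝ≥0∞) ^ l)⁻¹ • ∑ n ∈ words b d k l, .dirac ((n : ℝ) / b ^ l)

section Measure

variable {b d : ℕ}

theorem irwinMeasure_univ (hdb : d < b) (k : ℕ) : irwinMeasure b d k Set.univ = b := by
  have hb : (0 : ℝ) < b := by exact_mod_cast (by omega : 0 < b)
  have hmass := hasSum_card_words_div hdb k
  calc irwinMeasure b d k Set.univ = ∑' l, ENNReal.ofReal (#(words b d k l) / (b : ℝ) ^ l) := by
        simp [irwinMeasure, hb, ENNReal.ofReal_pow, hb.le, mul_comm, div_eq_mul_inv]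
    _ = b := by
      rw [← ENNReal.ofReal_tsum_of_nonneg (fun l => by positivity) hmass.summable, hmass.tsum_eq,
        ENNReal.ofReal_natCast]

theorem irwinMeasure_real_univ (hdb : d < b) (k : ℕ) : (irwinMeasure b d k).real Set.univ = b := by
  rw [measureReal_def, irwinMeasure_univ hdb, ENNReal.toReal_natCast]

theorem isFiniteMeasure_irwinMeasure (hdb : d < b) (k : ℕ) :
    IsFiniteMeasure (irwinMeasure b d k) :=
  ⟨irwinMeasure_univ hdb k ▸ ENNReal.natCast_lt_top b⟩

theorem ae_irwinMeasure_mem_Icc (b d k : ℕ) : ∀ᵐ x ∂irwinMeasure b d k, x ∈ Set.Icc (0 : ℝ) 1 := by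
  refine Measure.ae_sum_iff.2 fun l => Measure.ae_smul_measure
    (ae_finsetSum_measure_iff.2 fun n hn => ?_) _
  have hn : (n : ℝ) ≤ b ^ l := by exact_mod_cast (mem_range.1 (mem_filter.1 hn).1).le
  rw [ae_dirac_eq]
  exact ⟨by positivity, div_le_one_of_le₀ hn (by positivity)⟩

theorem hasSum_integral_irwinMeasure (k : ℕ) {f : ℝ → ℝ}
    (hf : Integrable f (irwinMeasure b d k)) :
    HasSum (fun l => ((b : ℝ) ^ l)⁻¹ * ∑ n ∈ words b d k l, f (n / b ^ l))
      (∫ x, f x ∂irwinMeasure b d k) := by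
  convert! hasSum_integral_measure hf using 2 with l
  rw [integral_smul_measure, integral_finsetSum_measure fun n _ => integrable_dirac (by simp)]
  simp

theorem momentU_eq_integral (hdb : d < b) (k m : ℕ) :
    momentU b d k m = ∫ x, x ^ m ∂irwinMeasure b d k := by
  have := isFiniteMeasure_irwinMeasure hdb k
  have hint := integrable_pow (ae_irwinMeasure_mem_Icc b d k) m
  rw [← (hasSum_integral_irwinMeasure k hint).tsum_eq, momentU]
  refine tsum_congr fun l => ?_
  rw [words, sum_filter, mul_sum, mul_sum]
  refine sum_congr rfl fun n _ => ?_
  rw [digitCount]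
  split_ifs
  · rw [mul_add_one, pow_add, pow_mul, div_pow, mul_inv]
    ring
  · simp

theorem abs_momentU_le (hdb : d < b) (k m : ℕ) : |momentU b d k m| ≤ b := by
  have := isFiniteMeasure_irwinMeasure hdb k
  rw [momentU_eq_integral hdb, ← irwinMeasure_real_univ hdb k]
  exact abs_integral_pow_le (ae_irwinMeasure_mem_Icc b d k) m

end Measure

section Potential

variable {b d : ℕ}

theorem hasSum_stieltjes_irwinMeasure (hdb : d < b) (k : ℕ) {y : ℝ} (hy : 0 < y) :
    HasSum (fun l => ∑ n ∈ words b d k l, 1 / (y * b ^ l + n))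
      (stieltjes (irwinMeasure b d k) y) := by
  have := isFiniteMeasure_irwinMeasure hdb k
  have hb : (0 : ℝ) < b := by exact_mod_cast (by omega : 0 < b)
  convert! hasSum_integral_irwinMeasure k
    (integrable_one_div_add (ae_irwinMeasure_mem_Icc b d k) hy) using 2 with l
  rw [mul_sum]
  refine sum_congr rfl fun n _ => ?_
  field_simp

theorem stieltjes_irwinMeasure_zero (hdb : d < b) {y : ℝ} (hy : 0 < y) :
    stieltjes (irwinMeasure b d 0) y =
      1 / y + ∑ a ∈ (range b).erase d, stieltjes (irwinMeasure b d 0) (b * y + a) := by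
  have hb : (0 : ℝ) < b := by exact_mod_cast (by omega : 0 < b)
  have hlevel (l : ℕ) : ∑ n ∈ words b d 0 (l + 1), 1 / (y * b ^ (l + 1) + n) =
      ∑ a ∈ (range b).erase d, ∑ t ∈ words b d 0 l, 1 / ((b * y + a) * b ^ l + t) := by
    rw [sum_words_zero_length_succ hdb]
    exact sum_congr rfl fun a _ => sum_congr rfl fun t _ => by push_cast; ring
  have htail := (hasSum_nat_add_iff' 1).2 (hasSum_stieltjes_irwinMeasure hdb 0 hy)
  simp only [hlevel, sum_range_one, words_length_zero, sum_singleton, pow_zero, mul_one,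
    Nat.cast_zero, add_zero] at htail
  rw [← sub_eq_iff_eq_add']
  exact htail.unique (hasSum_sum fun a _ =>
    hasSum_stieltjes_irwinMeasure hdb 0 (by positivity))

theorem stieltjes_irwinMeasure_succ (hdb : d < b) (k : ℕ) {y : ℝ} (hy : 0 < y) :
    stieltjes (irwinMeasure b d (k + 1)) y =
      stieltjes (irwinMeasure b d k) (b * y + d) +
        ∑ a ∈ (range b).erase d, stieltjes (irwinMeasure b d (k + 1)) (b * y + a) := by
  have hb : (0 : ℝ) < b := by exact_mod_cast (by omega : 0 < b)
  have hlevel (l : ℕ) : ∑ n ∈ words b d (k + 1) (l + 1), 1 / (y * b ^ (l + 1) + n) =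
      ∑ t ∈ words b d k l, 1 / ((b * y + d) * b ^ l + t) +
        ∑ a ∈ (range b).erase d, ∑ t ∈ words b d (k + 1) l, 1 / ((b * y + a) * b ^ l + t) := by
    rw [sum_words_succ_length_succ hdb]
    congr 1
    · exact sum_congr rfl fun t _ => by push_cast; ring
    · exact sum_congr rfl fun a _ => sum_congr rfl fun t _ => by push_cast; ring
  have htail := (hasSum_nat_add_iff' 1).2 (hasSum_stieltjes_irwinMeasure hdb (k + 1) hy)
  simp only [hlevel, sum_range_one, words_succ_length_zero, sum_empty, sub_zero] at htail
  exact htail.unique ((hasSum_stieltjes_irwinMeasure hdb k (by positivity)).add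
    (hasSum_sum fun a _ => hasSum_stieltjes_irwinMeasure hdb (k + 1) (by positivity)))

theorem sum_Ico_pow_ite_count_digits (hd : 0 < d) (hdb : d < b) (k l : ℕ) :
    ∑ n ∈ Ico (b ^ l) (b ^ (l + 1)),
        (if 0 < n ∧ (Nat.digits b n).count d = k + 1 then (1 : ℝ) / n else 0) =
      ∑ t ∈ words b d k l, 1 / ((d : ℝ) * b ^ l + t) +
        ∑ a ∈ (Ico 1 b).erase d, ∑ t ∈ words b d (k + 1) l, 1 / ((a : ℝ) * b ^ l + t) := by
  have hlead (a t : ℕ) (ha : 0 < a) : b ^ l ≤ a * b ^ l + t :=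
    (Nat.le_mul_of_pos_left _ ha).trans (Nat.le_add_right _ _)
  rw [← sum_filter, filter_Ico_pow_count_digits (by omega), sum_filter,
    sum_words_succ_length_succ hdb]
  congr 1
  · refine sum_congr rfl fun t _ => ?_
    rw [if_pos (hlead d t hd)]
    push_cast
    rfl
  · have hzero : ∀ t ∈ words b d (k + 1) l, ¬ b ^ l ≤ 0 * b ^ l + t := fun t ht => by
      rw [zero_mul, zero_add, not_le]
      exact mem_range.1 (mem_filter.1 ht).1
    have hrange : (range b).erase d = insert 0 ((Ico 1 b).erase d) := by
      ext a
      simp only [mem_erase, mem_range, mem_insert, mem_Ico]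
      omega
    rw [hrange, sum_insert (by simp), sum_eq_zero fun t ht => if_neg (hzero t ht), zero_add]
    refine sum_congr rfl fun a ha => sum_congr rfl fun t _ => ?_
    rw [if_pos (hlead a t (mem_Ico.1 (mem_of_mem_erase ha)).1)]
    push_cast
    rfl

theorem irwinSum_succ (hd : 0 < d) (hdb : d < b) (k : ℕ) :
    irwinSum b d (k + 1) = stieltjes (irwinMeasure b d k) d +
      ∑ a ∈ (Ico 1 b).erase d, stieltjes (irwinMeasure b d (k + 1)) a := by
  have hb : 1 < b := by omega
  have hblocks := (hasSum_stieltjes_irwinMeasure hdb k (Nat.cast_pos.2 hd)).add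
    (hasSum_sum fun a (ha : a ∈ (Ico 1 b).erase d) => hasSum_stieltjes_irwinMeasure hdb (k + 1)
      (Nat.cast_pos.2 (mem_Ico.1 (mem_of_mem_erase ha)).1))
  simp only [← sum_Ico_pow_ite_count_digits hd hdb] at hblocks
  have hsum := hasSum_of_hasSum_sum_Ico (fun n => by positivity) (pow_right_mono₀ hb.le)
    (tendsto_pow_atTop_atTop_of_one_lt hb) hblocks
  simpa [irwinSum] using hsum.tsum_eq

theorem div_add_one_le_stieltjes_irwinMeasure (hdb : d < b) (k : ℕ) {y : ℝ} (hy : 0 < y) :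
    b / (y + 1) ≤ stieltjes (irwinMeasure b d k) y := by
  have := isFiniteMeasure_irwinMeasure hdb k
  simpa only [irwinMeasure_real_univ hdb] using
    div_add_one_le_stieltjes (ae_irwinMeasure_mem_Icc b d k) hy

theorem stieltjes_irwinMeasure_le_div (hdb : d < b) (k : ℕ) {y : ℝ} (hy : 0 < y) :
    stieltjes (irwinMeasure b d k) y ≤ b / y := by
  have := isFiniteMeasure_irwinMeasure hdb k
  simpa only [irwinMeasure_real_univ hdb] using
    stieltjes_le_div (ae_irwinMeasure_mem_Icc b d k) hy

theorem abs_stieltjes_irwinMeasure_sub_le (hdb : d < b) (k j : ℕ) {y : ℝ} (hy : 0 < y) :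
    |stieltjes (irwinMeasure b d k) y - stieltjes (irwinMeasure b d j) y| ≤ b * (1 / y ^ 2) := by
  have hgap : b / y - b / (y + 1) ≤ b * (1 / y ^ 2) := by
    rw [div_sub_div _ _ hy.ne' (by positivity), mul_one_div]
    gcongr <;> nlinarith
  rw [abs_le]
  constructor <;>
    linarith [div_add_one_le_stieltjes_irwinMeasure hdb k hy,
      div_add_one_le_stieltjes_irwinMeasure hdb j hy,
      stieltjes_irwinMeasure_le_div hdb k hy, stieltjes_irwinMeasure_le_div hdb j hy]

theorem sum_Ico_stieltjes_irwinMeasure_sub (hdb : d < b) (k : ℕ) {n : ℕ} (hn : 0 < n) :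
    ∑ m ∈ Ico n (b * n), stieltjes (irwinMeasure b d (k + 1)) m -
        ∑ m ∈ Ico (n + 1) (b * (n + 1)), stieltjes (irwinMeasure b d (k + 1)) m =
      stieltjes (irwinMeasure b d k) (b * n + d) -
        stieltjes (irwinMeasure b d (k + 1)) (b * n + d) := by
  have hshift := sum_Ico_add_one_mul (fun m : ℕ => stieltjes (irwinMeasure b d (k + 1)) m)
    (by omega : 0 < b) (n := n)
  rw [stieltjes_irwinMeasure_succ hdb k (Nat.cast_pos.2 hn),
    ← add_sum_erase _ _ (mem_range.2 hdb)] at hshift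
  push_cast at hshift
  linarith

theorem hasSum_stieltjes_irwinMeasure_sub (hd : 0 < d) (hdb : d < b) (k : ℕ) :
    HasSum (fun n : ℕ => stieltjes (irwinMeasure b d k) (b * n + d) -
        stieltjes (irwinMeasure b d (k + 1)) (b * n + d))
      (irwinSum b d (k + 1) - b * Real.log b) := by
  have hb : 0 < b := by omega
  let f (n : ℕ) : ℝ := stieltjes (irwinMeasure b d k) (b * n + d) -
    stieltjes (irwinMeasure b d (k + 1)) (b * n + d)
  let S (n : ℕ) : ℝ := ∑ m ∈ Ico n (b * n), stieltjes (irwinMeasure b d (k + 1)) m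
  have htele (N : ℕ) : ∑ n ∈ range N, f (n + 1) = S 1 - S (N + 1) := by
    rw [← sum_range_sub' (fun n => S (n + 1))]
    exact sum_congr rfl fun n _ => (sum_Ico_stieltjes_irwinMeasure_sub hdb k n.succ_pos).symm
  have hlim : Tendsto (fun N => S (N + 1)) atTop (𝓝 (b * Real.log b)) :=
    (tendsto_sum_Ico_mul_of_le_of_le
      (fun n hn => div_add_one_le_stieltjes_irwinMeasure hdb (k + 1) (Nat.cast_pos.2 hn))
      (fun n hn => stieltjes_irwinMeasure_le_div hdb (k + 1) (Nat.cast_pos.2 hn)) hb).comp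
      (tendsto_add_atTop_nat 1)
  have hsummable : Summable fun n => f (n + 1) := by
    refine ((summable_one_div_mul_add_pow (Nat.cast_pos.2 hb) (Nat.cast_nonneg d)
      one_lt_two).mul_left (b : ℝ)).of_norm_bounded fun n => ?_
    rw [← Nat.cast_succ]
    exact abs_stieltjes_irwinMeasure_sub_le hdb k (k + 1) (by positivity)
  have hfirst : irwinSum b d (k + 1) = f 0 + S 1 := by
    have hS : S 1 = stieltjes (irwinMeasure b d (k + 1)) d +
        ∑ a ∈ (Ico 1 b).erase d, stieltjes (irwinMeasure b d (k + 1)) a := by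
      simp only [S, mul_one]
      exact (add_sum_erase _ _ (mem_Ico.2 ⟨hd, hdb⟩)).symm
    rw [irwinSum_succ hd hdb, hS]
    simp only [f, Nat.cast_zero, mul_zero, zero_add]
    ring
  have htail : HasSum (fun n => f (n + 1)) (S 1 - b * Real.log b) := by
    rw [hsummable.hasSum_iff_tendsto_nat]
    simp only [htele]
    exact hlim.const_sub (S 1)
  convert! htail.zero_add using 1
  rw [hfirst, add_sub_assoc]

end Potential

section Expansion

variable {b d : ℕ}

theorem hasSum_momentU_div_pow (hdb : d < b) (k : ℕ) {y : ℝ} (hy : 1 < y) :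
    HasSum (fun j : ℕ => (-1) ^ j * momentU b d k (j + 1) / y ^ (j + 2))
      (b / y - stieltjes (irwinMeasure b d k) y) := by
  have := isFiniteMeasure_irwinMeasure hdb k
  simpa only [momentU_eq_integral hdb, irwinMeasure_real_univ hdb] using
    hasSum_integral_pow_div_pow (ae_irwinMeasure_mem_Icc b d k) hy

theorem hasSum_momentU_sub_mul_one_div_pow (hdb : d < b) (k : ℕ) {y : ℝ} (hy : 1 < y) :
    HasSum (fun j : ℕ => (-1) ^ j * (momentU b d (k + 1) (j + 1) - momentU b d k (j + 1)) *
        (1 / y ^ (j + 2)))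
      (stieltjes (irwinMeasure b d k) y - stieltjes (irwinMeasure b d (k + 1)) y) := by
  convert! (hasSum_momentU_div_pow hdb (k + 1) hy).sub (hasSum_momentU_div_pow hdb k hy) using 1
  · ext j
    ring
  · ring

theorem hasSum_momentU_sub_mul_tsum (hd : 0 < d) (hdb : d < b) (k : ℕ) :
    HasSum (fun j : ℕ => (-1) ^ j * (momentU b d (k + 1) (j + 1) - momentU b d k (j + 1)) *
        ∑' n : ℕ, 1 / ((b : ℝ) * (n + 1) + d) ^ (j + 2))
      (irwinSum b d (k + 1) - b * Real.log b -
        (stieltjes (irwinMeasure b d k) d - stieltjes (irwinMeasure b d (k + 1)) d)) := by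
  have hb : (2 : ℝ) ≤ b := by exact_mod_cast (by omega : 2 ≤ b)
  have hnode (n : ℕ) : 2 ≤ (b : ℝ) * (n + 1) + d := by
    nlinarith [n.cast_nonneg (α := ℝ), d.cast_nonneg (α := ℝ)]
  have hcoeff (j : ℕ) :
      ‖(-1 : ℝ) ^ j * (momentU b d (k + 1) (j + 1) - momentU b d k (j + 1))‖ ≤ b + b := by
    rw [norm_mul, norm_pow, norm_neg, norm_one, one_pow, one_mul]
    exact (norm_sub_le _ _).trans (add_le_add (abs_momentU_le hdb _ _) (abs_momentU_le hdb _ _))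
  have hinv (n : ℕ) : ‖1 / ((b : ℝ) * (n + 1) + d)‖ ≤ 1 / 2 := by
    rw [Real.norm_of_nonneg (by positivity)]
    exact one_div_le_one_div_of_le two_pos (hnode n)
  have hsq : Summable fun n : ℕ => ‖1 / ((b : ℝ) * (n + 1) + d)‖ ^ 2 := by
    simp only [Real.norm_eq_abs, sq_abs, one_div_pow]
    exact summable_one_div_mul_add_pow (by linarith) (Nat.cast_nonneg d) one_lt_two
  have hexchange := hasSum_mul_tsum_pow hcoeff one_half_pos.le one_half_lt_one hinv hsq fun n => by
    simpa only [one_div_pow] using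
      hasSum_momentU_sub_mul_one_div_pow hdb k (one_lt_two.trans_le (hnode n))
  have htail := (hasSum_nat_add_iff' 1).2 (hasSum_stieltjes_irwinMeasure_sub hd hdb k)
  simp only [sum_range_one, Nat.cast_zero, mul_zero, zero_add, Nat.cast_add_one] at htail
  simpa only [one_div_pow, htail.tsum_eq] using hexchange

theorem hasSum_momentU_sub_mul_sum_ite (hd : 0 < d) (hdb : d < b) (k : ℕ) :
    HasSum (fun j : ℕ => (-1) ^ j * (momentU b d (k + 1) (j + 1) - momentU b d k (j + 1)) *
        ∑ a ∈ range b, if a ≠ d then 1 / ((b : ℝ) * d + a) ^ (j + 2) else 0)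
      (∑ a ∈ (range b).erase d, (stieltjes (irwinMeasure b d k) (b * d + a) -
        stieltjes (irwinMeasure b d (k + 1)) (b * d + a))) := by
  have hnode (a : ℕ) : 1 < (b : ℝ) * d + a := by
    exact_mod_cast (by nlinarith : 1 < b * d + a)
  simp only [← sum_filter, filter_ne', mul_sum]
  exact hasSum_sum fun a _ => hasSum_momentU_sub_mul_one_div_pow hdb k (hnode a)

end Expansion

end Irwin

/-- Exact convergent series for `I(b,d,1)`, `0 < d < b`
(series over `m ≥ 1` indexed by `m = j + 1`, series over `n ≥ 1` indexed by `n + 1`). -/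
theorem irwin_d_one_series (b d : ℕ) (hd : 0 < d) (hdb : d < b) :
    (∀ j : ℕ, Summable fun n : ℕ =>
      1 / ((b : ℝ) * (n + 1) + d) ^ (j + 2)) ∧
    Summable (fun j : ℕ =>
      (-1 : ℝ) ^ j * (momentU b d 1 (j + 1) - momentU b d 0 (j + 1)) *
        ((∑' n : ℕ, 1 / ((b : ℝ) * (n + 1) + d) ^ (j + 2))
          + ∑ a ∈ Finset.range b, if a ≠ d then 1 / ((b : ℝ) * d + a) ^ (j + 2) else 0)) ∧
    Summable (fun j : ℕ =>
      (-1 : ℝ) ^ j * momentU b d 0 (j + 1) / ((b : ℝ) * d + d) ^ (j + 2)) ∧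
    irwinSum b d 1 = (b : ℝ) * Real.log b +
      (∑' j : ℕ,
        (-1 : ℝ) ^ j * (momentU b d 1 (j + 1) - momentU b d 0 (j + 1)) *
          ((∑' n : ℕ, 1 / ((b : ℝ) * (n + 1) + d) ^ (j + 2))
            + ∑ a ∈ Finset.range b, if a ≠ d then 1 / ((b : ℝ) * d + a) ^ (j + 2) else 0)) +
      1 / ((b : ℝ) * d + d) +
      ∑' j : ℕ,
        (-1 : ℝ) ^ j * momentU b d 0 (j + 1) / ((b : ℝ) * d + d) ^ (j + 2) := by
  have hb : (0 : ℝ) < b := by exact_mod_cast hd.trans hdb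
  have hd' : (0 : ℝ) < d := by exact_mod_cast hd
  have hnode : 1 < (b : ℝ) * d + d := by exact_mod_cast (by nlinarith : 1 < b * d + d)
  have hmain := (Irwin.hasSum_momentU_sub_mul_tsum hd hdb 0).add
    (Irwin.hasSum_momentU_sub_mul_sum_ite hd hdb 0)
  simp only [← mul_add, zero_add] at hmain
  have hexcess := Irwin.hasSum_momentU_div_pow hdb 0 hnode
  refine ⟨fun j => Irwin.summable_one_div_mul_add_pow hb hd'.le (by omega),
    hmain.summable, hexcess.summable, ?_⟩
  have hzero := Irwin.stieltjes_irwinMeasure_zero hdb hd'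
  have hone := Irwin.stieltjes_irwinMeasure_succ hdb 0 hd'
  have hmass : 1 / (d : ℝ) - b / (b * d + d) = 1 / (b * d + d) := by
    field_simp
    ring
  rw [hmain.tsum_eq, hexcess.tsum_eq, Finset.sum_sub_distrib]
  linarith
end
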